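/- arXiv:0911.0804 — 3 statements merged into one kernel-verified Lean document; each statement's English description precedes it below -/
import Mathlib

section
/- The maps f(x) = x + exp(-1/x) (for x > 0, f(0)=0) and g(x) = x + exp(-1/x²) (for x > 0, g(0)=0) are smooth diffeomorphisms of [0,∞) that are not conjugate in the group of C¹ diffeomorphisms of [0,∞): there is no C¹ diffeomorphism h of [0,∞) with h ∘ f = g ∘ h. -/
open Set

/-! If `h` is `C¹` with `h' 0 ≠ 0` and `h ∘ f = g ∘ h`, then the displacement `g (h x) - h x` is the
increment of `h` between `x` and `f x`, hence comparable to `f x - x` as `x → 0⁺`. But `h x = O(x)`,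
and `exp (-1 / (C * x) ^ n)` is negligible against `exp (-1 / x ^ m)` for `m < n`. -/

open Filter Topology Asymptotics

section GeneralLemmas

theorem bijOn_Ici_of_strictMonoOn {α β : Type*}
    [ConditionallyCompleteLinearOrder α] [TopologicalSpace α] [OrderTopology α] [DenselyOrdered α]
    [LinearOrder β] [TopologicalSpace β] [OrderClosedTopology β] {f : α → β} {a : α}
    (hcont : ContinuousOn f (Ici a)) (hmono : StrictMonoOn f (Ici a))
    (htop : Tendsto f atTop atTop) : BijOn f (Ici a) (Ici (f a)) :=
  have : Nonempty α := ⟨a⟩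
  ⟨fun _ hx => hmono.monotoneOn self_mem_Ici hx hx, hmono.injOn,
    isPreconnected_Ici.intermediate_value_Ici self_mem_Ici
      (le_principal_iff.2 (Ici_mem_atTop a)) hcont htop⟩

theorem hasFDerivAtFilter_nhdsWithin_prod_of_convex {E F : Type*}
    [NormedAddCommGroup E] [NormedSpace ℝ E] [NormedAddCommGroup F] [NormedSpace ℝ F]
    {f : E → F} {f' : E → E →L[ℝ] F} {s : Set E} {a : E} (hs : Convex ℝ s)
    (hder : ∀ᶠ x in 𝓝[s] a, HasFDerivWithinAt f (f' x) s x) (hcont : ContinuousWithinAt f' s a) :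
    HasFDerivAtFilter f (f' a) (𝓝[s] a ×ˢ 𝓝[s] a) := by
  refine .of_isLittleO (isLittleO_iff.2 fun c hc => ?_)
  have hclose : ∀ᶠ x in 𝓝[s] a, HasFDerivWithinAt f (f' x) s x ∧ ‖f' x - f' a‖ ≤ c := by
    filter_upwards [hder, hcont (Metric.closedBall_mem_nhds _ hc)] with x hx hxc
    exact ⟨hx, mem_closedBall_iff_norm.1 hxc⟩
  obtain ⟨ε, hε, hball⟩ := Metric.mem_nhdsWithin_iff.1 hclose
  have hmem : Metric.ball a ε ∩ s ∈ 𝓝[s] a :=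
    inter_mem (mem_nhdsWithin_of_mem_nhds (Metric.ball_mem_nhds a hε)) self_mem_nhdsWithin
  filter_upwards [prod_mem_prod hmem hmem] with p hp
  exact ((convex_ball a ε).inter hs).norm_image_sub_le_of_norm_hasFDerivWithin_le'
    (fun x hx => (hball hx).1.mono inter_subset_right) (fun x hx => (hball hx).2) hp.2 hp.1

theorem hasDerivAtFilter_nhdsWithin_prod_of_contDiffOn {F : Type*} [NormedAddCommGroup F]
    [NormedSpace ℝ F] {f : ℝ → F} {s : Set ℝ} {a : ℝ} (hs : Convex ℝ s) (hs' : UniqueDiffOn ℝ s)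
    (ha : a ∈ s) (hf : ContDiffOn ℝ 1 f s) :
    HasDerivAtFilter f (derivWithin f s a) (𝓝[s] a ×ˢ 𝓝[s] a) := by
  rw [HasDerivAtFilter, toSpanSingleton_derivWithin]
  refine hasFDerivAtFilter_nhdsWithin_prod_of_convex hs ?_
    (hf.continuousOn_fderivWithin hs' le_rfl a ha)
  filter_upwards [self_mem_nhdsWithin] with x hx
  exact (hf.differentiableOn one_ne_zero x hx).hasFDerivWithinAt

theorem isTheta_displacement_of_semiconj {𝕜 F : Type*} [NontriviallyNormedField 𝕜]
    [NormedAddCommGroup F] [NormedSpace 𝕜 F] {h : 𝕜 → F} {h' : F} {f : 𝕜 → 𝕜} {g : F → F}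
    {l : Filter 𝕜} (hh : HasDerivAtFilter h h' (l ×ˢ l)) (hh' : h' ≠ 0) (hf : Tendsto f l l)
    (hconj : h ∘ f =ᶠ[l] g ∘ h) : (fun x => g (h x) - h x) =Θ[l] fun x => f x - x := by
  have hlim : Tendsto (fun x => (f x, x)) l (l ×ˢ l) := hf.prodMk tendsto_id
  have hincr := hh.isTheta_sub hh'
  have hθ : (fun x => h (f x) - h x) =Θ[l] fun x => f x - x :=
    ⟨hincr.isBigO.comp_tendsto hlim, hincr.isBigO_symm.comp_tendsto hlim⟩
  exact EventuallyEq.trans_isTheta (hconj.symm.sub .rfl) hθ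

theorem tendsto_const_mul_pow_sub_pow_atTop {m n : ℕ} (hmn : m < n) {c : ℝ} (hc : 0 < c) :
    Tendsto (fun t : ℝ => c * t ^ n - t ^ m) atTop atTop := by
  have hpow : (fun t : ℝ => t ^ m) =o[atTop] fun t => c * t ^ n :=
    (isLittleO_pow_pow_atTop_of_lt hmn).const_mul_right hc.ne'
  have hequiv := (IsEquivalent.refl (u := fun t : ℝ => c * t ^ n)).sub_isLittleO hpow
  exact hequiv.symm.tendsto_atTop ((tendsto_pow_atTop (by lia)).const_mul_atTop hc)

end GeneralLemmas

section ExpNegInvGlue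

theorem expNegInvGlue_of_pos {x : ℝ} (hx : 0 < x) : expNegInvGlue x = Real.exp (-x⁻¹) :=
  if_neg hx.not_ge

theorem isLittleO_expNegInvGlue_const_mul_pow {m n : ℕ} (hmn : m < n) {C : ℝ} (hC : 0 < C) :
    (fun x => expNegInvGlue ((C * x) ^ n)) =o[𝓝[>] 0] fun x => expNegInvGlue (x ^ m) := by
  have hexp : (fun x : ℝ => Real.exp (-((C * x) ^ n)⁻¹)) =o[𝓝[>] 0]
      fun x => Real.exp (-(x ^ m)⁻¹) := by
    rw [Real.isLittleO_exp_comp_exp_comp]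
    refine ((tendsto_const_mul_pow_sub_pow_atTop hmn (c := (C ^ n)⁻¹) (by positivity)).comp
      tendsto_inv_nhdsGT_zero).congr fun x => ?_
    simp only [Function.comp_apply, mul_pow, mul_inv, inv_pow]
    ring
  refine hexp.congr' ?_ ?_ <;>
    filter_upwards [self_mem_nhdsWithin] with x (hx : 0 < x) <;>
    rw [expNegInvGlue_of_pos (by positivity)]

theorem isLittleO_expNegInvGlue_pow_comp {m n : ℕ} (hmn : m < n) {h : ℝ → ℝ}
    (hh : h =O[𝓝[>] 0] id) :
    (fun x => expNegInvGlue (h x ^ n)) =o[𝓝[>] 0] fun x => expNegInvGlue (x ^ m) := by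
  obtain ⟨C, hC, hhC⟩ := hh.exists_pos
  refine IsBigO.trans_isLittleO (.of_bound' ?_) (isLittleO_expNegInvGlue_const_mul_pow hmn hC)
  filter_upwards [hhC.bound, self_mem_nhdsWithin] with x hx (hx0 : 0 < x)
  have habs : |h x| ≤ C * x := by simpa [abs_of_pos hx0] using hx
  rw [Real.norm_of_nonneg (expNegInvGlue.nonneg _), Real.norm_of_nonneg (expNegInvGlue.nonneg _)]
  apply expNegInvGlue.monotone
  calc h x ^ n ≤ |h x| ^ n := (le_abs_self _).trans_eq (abs_pow _ _)
    _ ≤ (C * x) ^ n := by gcongr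

end ExpNegInvGlue

/-- The map `x ↦ x + exp (-1 / x ^ n)` of `[0, ∞)`, infinitely tangent to the identity at `0` when
`n ≠ 0`. It is expressed through `expNegInvGlue` to be smooth on all of `ℝ`; its values at negative
arguments are irrelevant. -/
noncomputable def flatShift (n : ℕ) (x : ℝ) : ℝ :=
  x + expNegInvGlue (x ^ n)

section FlatShift

variable {m n : ℕ}

theorem flatShift_sub_self (x : ℝ) : flatShift n x - x = expNegInvGlue (x ^ n) :=
  add_sub_cancel_left _ _

theorem le_flatShift (x : ℝ) : x ≤ flatShift n x :=
  le_add_of_nonneg_right (expNegInvGlue.nonneg _)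

theorem flatShift_zero (hn : n ≠ 0) : flatShift n 0 = 0 := by
  simp [flatShift, hn]

theorem flatShift_eq_self_iff (hn : n ≠ 0) {x : ℝ} (hx : 0 ≤ x) : flatShift n x = x ↔ x = 0 := by
  rw [← sub_eq_zero, flatShift_sub_self, expNegInvGlue.zero_iff_nonpos,
    (pow_nonneg hx n).ge_iff_eq', pow_eq_zero_iff hn]

theorem eqOn_flatShift (hn : n ≠ 0) {f : ℝ → ℝ}
    (hf : ∀ x > 0, f x = x + Real.exp (-1 / x ^ n)) (hf0 : f 0 = 0) :
    EqOn f (flatShift n) (Ici 0) := by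
  rintro x (hx : 0 ≤ x)
  rcases hx.eq_or_lt with rfl | hx
  · rw [hf0, flatShift_zero hn]
  · rw [hf x hx, flatShift, expNegInvGlue_of_pos (by positivity), neg_div, one_div]

theorem contDiff_flatShift : ContDiff ℝ (⊤ : ℕ∞) (flatShift n) :=
  contDiff_id.add (expNegInvGlue.contDiff.comp (contDiff_id.pow n))

theorem strictMonoOn_flatShift : StrictMonoOn (flatShift n) (Ici 0) :=
  strictMonoOn_id.add_monotone fun _ hx _ _ hxy =>
    expNegInvGlue.monotone (pow_le_pow_left₀ hx hxy n)

theorem bijOn_flatShift (hn : n ≠ 0) : BijOn (flatShift n) (Ici 0) (Ici 0) := by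
  simpa only [flatShift_zero hn] using bijOn_Ici_of_strictMonoOn
    contDiff_flatShift.continuous.continuousOn strictMonoOn_flatShift
    (tendsto_atTop_mono (le_flatShift (n := n)) tendsto_id)

theorem tendsto_flatShift_nhdsGT_zero (hn : n ≠ 0) :
    Tendsto (flatShift n) (𝓝[>] 0) (𝓝[>] 0) := by
  refine tendsto_nhdsWithin_iff.2 ⟨?_, ?_⟩
  · exact tendsto_nhdsWithin_of_tendsto_nhds
      (contDiff_flatShift.continuous.tendsto' 0 0 (flatShift_zero hn))
  · filter_upwards [self_mem_nhdsWithin] with x (hx : 0 < x)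
    exact hx.trans_le (le_flatShift x)

theorem not_eqOn_comp_flatShift (hm : m ≠ 0) (hmn : m < n) {h : ℝ → ℝ}
    (hC : ContDiffOn ℝ 1 h (Ici 0)) (hmaps : MapsTo h (Ici 0) (Ici 0))
    (hh' : derivWithin h (Ici 0) 0 ≠ 0) :
    ¬ EqOn (h ∘ flatShift m) (flatShift n ∘ h) (Ici 0) := by
  intro hconj
  have h0 : h 0 = 0 := by
    rw [← flatShift_eq_self_iff (by lia : n ≠ 0) (hmaps self_mem_Ici)]
    simpa only [Function.comp_apply, flatShift_zero hm] using (hconj self_mem_Ici).symm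
  have hsub : 𝓝[>] (0 : ℝ) ≤ 𝓝[≥] 0 := nhdsWithin_mono 0 Ioi_subset_Ici_self
  have hstrict : HasDerivAtFilter h (derivWithin h (Ici 0) 0) (𝓝[>] 0 ×ˢ 𝓝[>] 0) :=
    (hasDerivAtFilter_nhdsWithin_prod_of_contDiffOn (convex_Ici 0) (uniqueDiffOn_Ici 0)
      self_mem_Ici hC).mono (prod_mono hsub hsub)
  have hθ : (fun x => expNegInvGlue (h x ^ n)) =Θ[𝓝[>] 0] fun x => expNegInvGlue (x ^ m) := by
    simpa only [flatShift_sub_self] using isTheta_displacement_of_semiconj hstrict hh'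
      (tendsto_flatShift_nhdsGT_zero hm) (hconj.eventuallyEq_nhdsWithin.filter_mono hsub)
  have hlinear : h =O[𝓝[>] 0] id :=
    ((hC.differentiableOn one_ne_zero 0 self_mem_Ici).isBigO_sub.mono hsub).congr
      (fun x => by rw [h0, sub_zero]) sub_zero
  have hpos : ∀ᶠ x in 𝓝[>] (0 : ℝ), expNegInvGlue (x ^ m) ≠ 0 := by
    filter_upwards [self_mem_nhdsWithin] with x hx
    exact (expNegInvGlue.pos_of_pos (pow_pos hx m)).ne'
  exact isLittleO_irrefl hpos.frequently
    (hθ.isBigO_symm.trans_isLittleO (isLittleO_expNegInvGlue_pow_comp hmn hlinear))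

end FlatShift

theorem stmt_4_general {m n : ℕ} (hm : m ≠ 0) (hmn : m < n) {f g : ℝ → ℝ}
    (hf : ∀ x > 0, f x = x + Real.exp (-1 / x ^ m)) (hf0 : f 0 = 0)
    (hg : ∀ x > 0, g x = x + Real.exp (-1 / x ^ n)) (hg0 : g 0 = 0) :
    (ContDiffOn ℝ (⊤ : ℕ∞) f (Ici 0) ∧ BijOn f (Ici 0) (Ici 0) ∧ StrictMonoOn f (Ici 0)) ∧
    (ContDiffOn ℝ (⊤ : ℕ∞) g (Ici 0) ∧ BijOn g (Ici 0) (Ici 0) ∧ StrictMonoOn g (Ici 0)) ∧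
    ¬ ∃ h : ℝ → ℝ, ContDiffOn ℝ 1 h (Ici 0) ∧ MapsTo h (Ici 0) (Ici 0) ∧
        derivWithin h (Ici 0) 0 ≠ 0 ∧ ∀ x ∈ Ici (0 : ℝ), h (f x) = g (h x) := by
  have hn : n ≠ 0 := by lia
  have hfm := eqOn_flatShift hm hf hf0
  have hgn := eqOn_flatShift hn hg hg0
  refine ⟨⟨contDiff_flatShift.contDiffOn.congr hfm, (bijOn_flatShift hm).congr hfm.symm,
      strictMonoOn_flatShift.congr hfm.symm⟩,
    ⟨contDiff_flatShift.contDiffOn.congr hgn, (bijOn_flatShift hn).congr hgn.symm,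
      strictMonoOn_flatShift.congr hgn.symm⟩, ?_⟩
  rintro ⟨h, hC, hmaps, hh', hconj⟩
  refine not_eqOn_comp_flatShift hm hmn hC hmaps hh' fun x hx => ?_
  rw [Function.comp_apply, Function.comp_apply, ← hfm hx, ← hgn (hmaps hx), hconj x hx]

/-- The maps `f(x) = x + e^{-1/x}` and `g(x) = x + e^{-1/x²}` (extended by `0 ↦ 0`)
are smooth diffeomorphisms of `[0,∞)` that are not conjugate by any C¹
diffeomorphism of `[0,∞)`. -/
theorem stmt_4 (f g : ℝ → ℝ)
    (hf : ∀ x > (0:ℝ), f x = x + Real.exp (-1 / x)) (hf0 : f 0 = 0)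
    (hg : ∀ x > (0:ℝ), g x = x + Real.exp (-1 / x ^ 2)) (hg0 : g 0 = 0) :
    (ContDiffOn ℝ (⊤ : ℕ∞) f (Ici 0) ∧ BijOn f (Ici 0) (Ici 0) ∧ StrictMonoOn f (Ici 0)) ∧
    (ContDiffOn ℝ (⊤ : ℕ∞) g (Ici 0) ∧ BijOn g (Ici 0) (Ici 0) ∧ StrictMonoOn g (Ici 0)) ∧
    ¬ ∃ h : ℝ → ℝ, ContDiffOn ℝ 1 h (Ici 0) ∧ BijOn h (Ici 0) (Ici 0) ∧
        StrictMonoOn h (Ici 0) ∧ (∀ x ∈ Ici (0:ℝ), derivWithin h (Ici 0) x ≠ 0) ∧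
        ∀ x ∈ Ici (0:ℝ), h (f x) = g (h x) := by
  refine (stmt_4_general one_ne_zero one_lt_two (by simpa using hf) hf0 hg hg0).imp_right
    (And.imp_right (mt ?_))
  rintro ⟨h, hC, hbij, -, hh', hconj⟩
  exact ⟨h, hC, hbij.mapsTo, hh' 0 self_mem_Ici, hconj⟩
end

section
/- Let I be an open interval and let f, g be fixed-point-free, orientation-preserving smooth diffeomorphisms of I. Then f and g are conjugate in the group of orientation-preserving smooth diffeomorphisms of I if and only if their graphs lie on the same side of the diagonal (i.e. either f(x) > x and g(x) > x for all x ∈ I, or f(x) < x and g(x) < x for all x ∈ I). -/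
open Set

/-!
A fixed-point-free diffeomorphism `p` of `I` with `x < p x` is smoothly conjugate to the translation
by `1` on `ℝ`: if `S` is a smooth step from `0` to `1` whose region of increase contains a
fundamental domain `[x₀, p x₀]`, then `φ x = ∑ k : ℤ, (S ((p ^ k) x) - [0 ≤ k])` is locally a finite
sum, increases strictly because every orbit meets the fundamental domain, and satisfies
`φ (p x) = φ x + 1` by shifting the index. Two diffeomorphisms above the diagonal are therefore
conjugate to each other, and those below the diagonal are the inverses of those above. Conversely,
an increasing conjugacy preserves the inequality `x < f x`.
-/

open Function Equiv
open scoped Topology ContDiff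

section SideOfDiagonal

variable {α β : Type*}

lemma forall_lt_apply_or_forall_apply_lt [LinearOrder α] [TopologicalSpace α]
    [OrderClosedTopology α] {s : Set α} {f : α → α} (hs : IsPreconnected s)
    (hf : ContinuousOn f s) (hfix : ∀ x ∈ s, f x ≠ x) :
    (∀ x ∈ s, x < f x) ∨ ∀ x ∈ s, f x < x := by
  by_contra! ⟨⟨x, hx, hfx⟩, y, hy, hfy⟩
  obtain ⟨z, hz, hfz⟩ := hs.intermediate_value₂ hx hy hf continuousOn_id hfx hfy
  exact hfix z hz hfz

variable [Preorder α] [Preorder β] {s : Set α} {t : Set β} {f : α → α} {g : β → β} {h : α → β}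

lemma forall_lt_apply_of_conj (hmono : StrictMonoOn h s) (hsurj : SurjOn h s t)
    (hf : MapsTo f s s) (hconj : ∀ x ∈ s, h (f x) = g (h x)) (hlt : ∀ x ∈ s, x < f x) :
    ∀ y ∈ t, y < g y := by
  intro y hy
  obtain ⟨x, hx, rfl⟩ := hsurj hy
  exact hconj x hx ▸ hmono hx (hf hx) (hlt x hx)

lemma forall_apply_lt_of_conj (hmono : StrictMonoOn h s) (hsurj : SurjOn h s t)
    (hf : MapsTo f s s) (hconj : ∀ x ∈ s, h (f x) = g (h x)) (hlt : ∀ x ∈ s, f x < x) :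
    ∀ y ∈ t, g y < y := by
  intro y hy
  obtain ⟨x, hx, rfl⟩ := hsurj hy
  exact hconj x hx ▸ hmono (hf hx) hx (hlt x hx)

end SideOfDiagonal

section Orbits

variable {α : Type*} {s : Set α} {p : Perm α}

-- Working with `p : Perm α` makes the integer iterates of `f` on `s` available as `p ^ k`.
lemma exists_perm_eqOn_of_bijOn {f : α → α} (hf : BijOn f s s) : ∃ p : Perm α, EqOn p f s := by
  classical
  exact ⟨Perm.ofSubtype (hf.equiv f), fun x hx => Perm.ofSubtype_apply_of_mem _ hx⟩

lemma strictMonoOn_inv [LinearOrder α] (hmono : StrictMonoOn p s) (hbij : BijOn p s s) :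
    StrictMonoOn ⇑p⁻¹ s := fun x hx y hy hxy => by
  rw [← hmono.lt_iff_lt (hbij.perm_inv.mapsTo hx) (hbij.perm_inv.mapsTo hy)]
  simpa using hxy

lemma strictMonoOn_zpow [LinearOrder α] (hmono : StrictMonoOn p s) (hbij : BijOn p s s) (k : ℤ) :
    StrictMonoOn ⇑(p ^ k) s := by
  induction k using Int.induction_on with
  | zero => exact strictMonoOn_id
  | succ k ih => rw [zpow_add_one]; exact ih.comp hmono hbij.mapsTo
  | pred k ih =>
    rw [zpow_sub_one]
    exact ih.comp (strictMonoOn_inv hmono hbij) hbij.perm_inv.mapsTo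

lemma strictMono_zpow_apply [Preorder α] (hbij : BijOn p s s) (hlt : ∀ x ∈ s, x < p x) {x : α}
    (hx : x ∈ s) : StrictMono fun k : ℤ => (p ^ k) x := by
  refine strictMono_int_of_lt_succ fun k => ?_
  rw [add_comm, zpow_one_add]
  exact hlt _ ((hbij.perm_zpow k).mapsTo hx)

variable [ConditionallyCompleteLinearOrder α]

lemma exists_lt_zpow_apply (hs : s.OrdConnected) (hmono : StrictMonoOn p s) (hbij : BijOn p s s)
    (hlt : ∀ x ∈ s, x < p x) {x c : α} (hx : x ∈ s) (hc : c ∈ s) : ∃ k : ℤ, c < (p ^ k) x := by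
  by_contra! hle
  set L := ⨆ k : ℤ, (p ^ k) x
  have hbdd : BddAbove (range fun k : ℤ => (p ^ k) x) := ⟨c, forall_mem_range.2 hle⟩
  have hL : L ∈ s := hs.out hx hc ⟨le_ciSup hbdd 0, ciSup_le hle⟩
  obtain ⟨z, hz, hzL⟩ := hbij.surjOn hL
  obtain ⟨k, hk⟩ := exists_lt_of_lt_ciSup (hzL ▸ hlt z hz : z < L)
  have hLk : L < (p ^ (1 + k)) x := by
    rw [zpow_one_add, ← hzL]
    exact hmono hz ((hbij.perm_zpow k).mapsTo hx) hk
  exact (le_ciSup hbdd (1 + k)).not_gt hLk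

lemma exists_zpow_apply_lt (hs : s.OrdConnected) (hmono : StrictMonoOn p s) (hbij : BijOn p s s)
    (hlt : ∀ x ∈ s, x < p x) {x c : α} (hx : x ∈ s) (hc : c ∈ s) : ∃ k : ℤ, (p ^ k) x < c := by
  obtain ⟨k, hk⟩ := exists_lt_zpow_apply hs hmono hbij hlt hc hx
  refine ⟨-k, ?_⟩
  simpa using strictMonoOn_zpow hmono hbij (-k) hx ((hbij.perm_zpow k).mapsTo hc) hk

lemma exists_forall_ge_lt_zpow_apply (hs : s.OrdConnected) (hmono : StrictMonoOn p s)
    (hbij : BijOn p s s) (hlt : ∀ x ∈ s, x < p x) {b c : α} (hb : b ∈ s) (hc : c ∈ s) :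
    ∃ N : ℤ, ∀ y ∈ s, c ≤ y → ∀ k ≥ N, b < (p ^ k) y := by
  obtain ⟨N, hN⟩ := exists_lt_zpow_apply hs hmono hbij hlt hc hb
  refine ⟨N, fun y hy hcy k hk => ?_⟩
  calc b < (p ^ N) c := hN
    _ ≤ (p ^ N) y := (strictMonoOn_zpow hmono hbij N).monotoneOn hc hy hcy
    _ ≤ (p ^ k) y := (strictMono_zpow_apply hbij hlt hy).monotone hk

lemma exists_forall_le_zpow_apply_lt (hs : s.OrdConnected) (hmono : StrictMonoOn p s)
    (hbij : BijOn p s s) (hlt : ∀ x ∈ s, x < p x) {a d : α} (ha : a ∈ s) (hd : d ∈ s) :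
    ∃ M : ℤ, ∀ y ∈ s, y ≤ d → ∀ k ≤ M, (p ^ k) y < a := by
  obtain ⟨M, hM⟩ := exists_zpow_apply_lt hs hmono hbij hlt hd ha
  refine ⟨M, fun y hy hyd k hk => ?_⟩
  calc (p ^ k) y ≤ (p ^ M) y := (strictMono_zpow_apply hbij hlt hy).monotone hk
    _ ≤ (p ^ M) d := (strictMonoOn_zpow hmono hbij M).monotoneOn hy hd hyd
    _ < a := hM

lemma exists_zpow_apply_mem_Ico (hs : s.OrdConnected) (hmono : StrictMonoOn p s)
    (hbij : BijOn p s s) (hlt : ∀ x ∈ s, x < p x) {x₀ x : α} (hx₀ : x₀ ∈ s) (hx : x ∈ s) :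
    ∃ k : ℤ, (p ^ k) x ∈ Ico x₀ (p x₀) := by
  obtain ⟨M, hM⟩ := exists_zpow_apply_lt hs hmono hbij hlt hx hx₀
  obtain ⟨N, hN⟩ := exists_lt_zpow_apply hs hmono hbij hlt hx hx₀
  have hbdd : ∀ k : ℤ, x₀ ≤ (p ^ k) x → M ≤ k := fun k hk =>
    ((strictMono_zpow_apply hbij hlt hx).lt_iff_lt.1 (hM.trans_le hk)).le
  obtain ⟨k, hk, hmin⟩ := Int.exists_least_of_bdd ⟨M, hbdd⟩ ⟨N, hN.le⟩
  refine ⟨k, hk, ?_⟩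
  have hpred : (p ^ (k - 1)) x < x₀ := not_le.1 fun hle => absurd (hmin _ hle) (by lia)
  have := hmono ((hbij.perm_zpow (k - 1)).mapsTo hx) hx₀ hpred
  rwa [← Perm.mul_apply, ← zpow_one_add, add_sub_cancel] at this

end Orbits

/-- `f` is an orientation-preserving `C^n` diffeomorphism of `s` onto `t`. Smoothness is required at
the points of `s`, which for open `s` is the same as `ContDiffOn`; the inverse is then `C^n` by
the inverse function theorem if `n ≠ 0` (see `IsPosDiffeoOn.of_leftInvOn`). -/
structure IsPosDiffeoOn (n : WithTop ℕ∞) (f : ℝ → ℝ) (s t : Set ℝ) : Prop where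
  contDiffAt : ∀ x ∈ s, ContDiffAt ℝ n f x
  bijOn : BijOn f s t
  deriv_pos : ∀ x ∈ s, 0 < deriv f x

lemma strictMonoOn_of_isOpen_of_deriv_pos {s : Set ℝ} {f : ℝ → ℝ} (hs : IsOpen s)
    (hsc : s.OrdConnected) (hf : ∀ x ∈ s, 0 < deriv f x) : StrictMonoOn f s :=
  strictMonoOn_of_deriv_pos hsc.convex
    (fun x hx => (differentiableAt_of_deriv_ne_zero
      (hf x hx).ne').continuousAt.continuousWithinAt)
    (by rwa [hs.interior_eq])

lemma contDiffAt_of_local_left_inverse {𝕜 E F : Type*} [RCLike 𝕜] [NormedAddCommGroup E]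
    [NormedSpace 𝕜 E] [CompleteSpace E] [NormedAddCommGroup F] [NormedSpace 𝕜 F]
    {n : WithTop ℕ∞} {f : E → F} {f' : E ≃L[𝕜] F} {g : F → E} {a : E} (hf : ContDiffAt 𝕜 n f a)
    (hf' : HasFDerivAt f (f' : E →L[𝕜] F) a) (hn : n ≠ 0) (hg : ∀ᶠ x in 𝓝 a, g (f x) = x) :
    ContDiffAt 𝕜 n g (f a) :=
  (hf.to_localInverse hf' hn).congr_of_eventuallyEq
    ((hf.hasStrictFDerivAt' hf' hn).localInverse_unique hg)

namespace IsPosDiffeoOn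

variable {n : WithTop ℕ∞} {s t u : Set ℝ} {f g : ℝ → ℝ}

lemma hasDerivAt (hf : IsPosDiffeoOn n f s t) {x : ℝ} (hx : x ∈ s) :
    HasDerivAt f (deriv f x) x :=
  (differentiableAt_of_deriv_ne_zero (hf.deriv_pos x hx).ne').hasDerivAt

lemma strictMonoOn (hf : IsPosDiffeoOn n f s t) (hs : IsOpen s) (hsc : s.OrdConnected) :
    StrictMonoOn f s :=
  strictMonoOn_of_isOpen_of_deriv_pos hs hsc hf.deriv_pos

lemma congr (hf : IsPosDiffeoOn n f s t) (hs : IsOpen s) (hgf : EqOn g f s) :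
    IsPosDiffeoOn n g s t where
  contDiffAt x hx :=
    (hf.contDiffAt x hx).congr_of_eventuallyEq (hgf.eventuallyEq_of_mem (hs.mem_nhds hx))
  bijOn := hf.bijOn.congr hgf.symm
  deriv_pos x hx := by
    rw [(hgf.eventuallyEq_of_mem (hs.mem_nhds hx)).deriv_eq]
    exact hf.deriv_pos x hx

protected lemma id : IsPosDiffeoOn n id s s where
  contDiffAt _ _ := contDiffAt_id
  bijOn := bijOn_id s
  deriv_pos _ _ := by simp

lemma comp (hg : IsPosDiffeoOn n g t u) (hf : IsPosDiffeoOn n f s t) :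
    IsPosDiffeoOn n (g ∘ f) s u where
  contDiffAt x hx := (hg.contDiffAt _ (hf.bijOn.mapsTo hx)).comp x (hf.contDiffAt x hx)
  bijOn := hg.bijOn.comp hf.bijOn
  deriv_pos x hx := by
    rw [((hg.hasDerivAt (hf.bijOn.mapsTo hx)).comp x (hf.hasDerivAt hx)).deriv]
    exact mul_pos (hg.deriv_pos _ (hf.bijOn.mapsTo hx)) (hf.deriv_pos x hx)

lemma of_leftInvOn (hf : IsPosDiffeoOn n f s t) (hn : n ≠ 0) (hs : IsOpen s)
    (hg : LeftInvOn g f s) : IsPosDiffeoOn n g t s := by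
  have hev : ∀ x ∈ s, ∀ᶠ z in 𝓝 x, g (f z) = z := fun x hx =>
    Filter.mem_of_superset (hs.mem_nhds hx) hg
  refine ⟨fun y hy => ?_, ?_, fun y hy => ?_⟩
  · obtain ⟨x, hx, rfl⟩ := hf.bijOn.surjOn hy
    exact contDiffAt_of_local_left_inverse (hf.contDiffAt x hx)
      ((hf.hasDerivAt hx).hasFDerivAt_equiv (hf.deriv_pos x hx).ne') hn (hev x hx)
  · exact hf.bijOn.symm ⟨hf.bijOn.image_eq ▸ hg.rightInvOn_image, hg⟩
  · obtain ⟨x, hx, rfl⟩ := hf.bijOn.surjOn hy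
    have hstrict := (hf.contDiffAt x hx).hasStrictDerivAt' (hf.hasDerivAt hx) hn
    rw [(hstrict.to_local_left_inverse (hf.deriv_pos x hx).ne' (hev x hx)).hasDerivAt.deriv]
    exact inv_pos.2 (hf.deriv_pos x hx)

lemma perm_inv {p : Perm ℝ} (hp : IsPosDiffeoOn n p s s) (hn : n ≠ 0) (hs : IsOpen s) :
    IsPosDiffeoOn n ⇑p⁻¹ s s :=
  hp.of_leftInvOn hn hs fun x _ => p.symm_apply_apply x

lemma perm_zpow {p : Perm ℝ} (hp : IsPosDiffeoOn n p s s) (hn : n ≠ 0) (hs : IsOpen s) (k : ℤ) :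
    IsPosDiffeoOn n ⇑(p ^ k) s s := by
  induction k using Int.induction_on with
  | zero => exact .id
  | succ k ih => rw [zpow_add_one]; exact ih.comp hp
  | pred k ih => rw [zpow_sub_one]; exact ih.comp (hp.perm_inv hn hs)

end IsPosDiffeoOn

/-- `S` is a smooth step from `0` to `1` whose region of increase is exactly `(a, b)`. -/
structure IsSmoothStep (S : ℝ → ℝ) (a b : ℝ) : Prop where
  contDiff : ContDiff ℝ ∞ S
  eq_zero : ∀ x ≤ a, S x = 0
  eq_one : ∀ x ≥ b, S x = 1
  monotone : Monotone S
  deriv_pos : ∀ x ∈ Ioo a b, 0 < deriv S x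

section SmoothStep

lemma hasDerivAt_expNegInvGlue (x : ℝ) :
    HasDerivAt expNegInvGlue (x⁻¹ ^ 2 * expNegInvGlue x) x := by
  simpa using expNegInvGlue.hasDerivAt_polynomial_eval_inv_mul 1 x

lemma deriv_smoothTransition_pos {x : ℝ} (hx : x ∈ Ioo 0 1) :
    0 < deriv Real.smoothTransition x := by
  obtain ⟨hx₀, hx₁⟩ := hx
  have hx₁' : 0 < 1 - x := sub_pos.2 hx₁
  have hright : HasDerivAt (fun y => expNegInvGlue (1 - y)) _ x :=
    (hasDerivAt_expNegInvGlue (1 - x)).comp x ((hasDerivAt_id x).const_sub 1)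
  have hderiv : HasDerivAt Real.smoothTransition _ x :=
    (hasDerivAt_expNegInvGlue x).div ((hasDerivAt_expNegInvGlue x).add hright)
      (Real.smoothTransition.pos_denom x).ne'
  rw [hderiv.deriv]
  refine div_pos ?_ (pow_pos (Real.smoothTransition.pos_denom x) 2)
  have hu := expNegInvGlue.pos_of_pos hx₀
  have hv := expNegInvGlue.pos_of_pos hx₁'
  calc 0 < (x⁻¹ ^ 2 + (1 - x)⁻¹ ^ 2) * (expNegInvGlue x * expNegInvGlue (1 - x)) := by positivity
    _ = _ := by ring

lemma exists_isSmoothStep {a b : ℝ} (hab : a < b) : ∃ S, IsSmoothStep S a b := by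
  have hba : 0 < b - a := sub_pos.2 hab
  refine ⟨fun x => Real.smoothTransition ((x - a) / (b - a)),
    Real.smoothTransition.contDiff.comp (by fun_prop), fun x hx => ?_, fun x hx => ?_,
    fun x y hxy => Real.smoothTransition.monotone (by gcongr), fun x hx => ?_⟩
  · exact Real.smoothTransition.zero_of_nonpos
      (div_nonpos_of_nonpos_of_nonneg (sub_nonpos.2 hx) hba.le)
  · exact Real.smoothTransition.one_of_one_le ((one_le_div hba).2 (sub_le_sub_right hx a))
  · have hpos : 0 < deriv Real.smoothTransition ((x - a) / (b - a)) :=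
      deriv_smoothTransition_pos ⟨div_pos (sub_pos.2 hx.1) hba,
        (div_lt_one hba).2 (sub_lt_sub_right hx.2 a)⟩
    have haffine : HasDerivAt (fun y => (y - a) / (b - a)) (1 / (b - a)) x :=
      ((hasDerivAt_id x).sub_const a).div_const (b - a)
    have hderiv : HasDerivAt (fun y => Real.smoothTransition ((y - a) / (b - a))) _ x :=
      HasDerivAt.comp (h₂ := Real.smoothTransition) x
        (differentiableAt_of_deriv_ne_zero hpos.ne').hasDerivAt haffine
    rw [hderiv.deriv]
    exact mul_pos hpos (one_div_pos.2 hba)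

end SmoothStep

section AbelSum

variable {α : Type*}

/-- The `k`-th term of `abelSum S p x`. Subtracting the indicator of `0 ≤ k` makes the
terms with large `k` vanish when `S` is a step function and `p` moves points upwards. -/
noncomputable def abelTerm (S : α → ℝ) (p : Perm α) (k : ℤ) (x : α) : ℝ :=
  S ((p ^ k) x) - if 0 ≤ k then 1 else 0

/-- The regularised orbit sum `∑ k : ℤ, (S ((p ^ k) x) - [0 ≤ k])`, a solution `φ` of the Abel
equation `φ (p x) = φ x + 1` wherever it converges. -/
noncomputable def abelSum (S : α → ℝ) (p : Perm α) (x : α) : ℝ :=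
  ∑' k : ℤ, abelTerm S p k x

lemma abelTerm_apply_perm (S : α → ℝ) (p : Perm α) (k : ℤ) (x : α) :
    abelTerm S p k (p x) = abelTerm S p (k + 1) x + if k + 1 = 0 then 1 else 0 := by
  simp only [abelTerm, zpow_add_one, Perm.mul_apply]
  grind

lemma abelSum_apply_perm {S : α → ℝ} {p : Perm α} {x : α}
    (hsum : Summable fun k => abelTerm S p k x) : abelSum S p (p x) = abelSum S p x + 1 := by
  have hdelta : Summable fun k : ℤ => if k = 0 then (1 : ℝ) else 0 :=
    (hasSum_ite_eq 0 1).summable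
  calc abelSum S p (p x)
      = ∑' k : ℤ, (abelTerm S p (k + 1) x + if k + 1 = 0 then 1 else 0) :=
        tsum_congr fun k => abelTerm_apply_perm S p k x
    _ = ∑' k : ℤ, (abelTerm S p k x + if k = 0 then 1 else 0) :=
        (Equiv.addRight (1 : ℤ)).tsum_eq fun k => abelTerm S p k x + if k = 0 then 1 else 0
    _ = abelSum S p x + 1 := by rw [hsum.tsum_add hdelta, tsum_ite_eq, abelSum]

lemma abelSum_eventuallyEq_sum {S : α → ℝ} {p : Perm α} {l : Filter α} {K : Finset ℤ}
    (hK : ∀ᶠ y in l, ∀ k ∉ K, abelTerm S p k y = 0) :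
    abelSum S p =ᶠ[l] fun y => ∑ k ∈ K, abelTerm S p k y :=
  hK.mono fun _ hy => tsum_eq_sum hy

lemma exists_finset_eventually_abelTerm_eq_zero [ConditionallyCompleteLinearOrder α]
    [TopologicalSpace α] [OrderTopology α] {s : Set α} {S : α → ℝ} {p : Perm α} {a b : α}
    (hso : IsOpen s) (hsc : s.OrdConnected) (hmono : StrictMonoOn p s) (hbij : BijOn p s s)
    (hlt : ∀ x ∈ s, x < p x) (hS₀ : ∀ x ≤ a, S x = 0) (hS₁ : ∀ x ≥ b, S x = 1) (ha : a ∈ s)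
    (hb : b ∈ s) {x : α} (hx : x ∈ s) :
    ∃ K : Finset ℤ, ∀ᶠ y in 𝓝 x, ∀ k ∉ K, abelTerm S p k y = 0 := by
  obtain ⟨c, hc, hcx⟩ : ∃ c ∈ s, c < x := by
    obtain ⟨c, hc, rfl⟩ := hbij.surjOn hx
    exact ⟨c, hc, hlt c hc⟩
  obtain ⟨N, hN⟩ := exists_forall_ge_lt_zpow_apply hsc hmono hbij hlt hb hc
  obtain ⟨M, hM⟩ := exists_forall_le_zpow_apply_lt hsc hmono hbij hlt ha (hbij.mapsTo hx)
  refine ⟨Finset.Ioo (min M (-1)) (max N 0), ?_⟩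
  filter_upwards [hso.mem_nhds hx, Icc_mem_nhds hcx (hlt x hx)] with y hys hy k hk
  rw [Finset.mem_Ioo, not_and_or, not_lt, not_lt, le_min_iff, max_le_iff] at hk
  rcases hk with ⟨hkM, hneg⟩ | ⟨hNk, hnonneg⟩
  · rw [abelTerm, hS₀ _ (hM y hys hy.2 k hkM).le, if_neg (by lia), sub_zero]
  · rw [abelTerm, hS₁ _ (hN y hys hy.1 k hNk).le, if_pos hnonneg, sub_self]

end AbelSum

lemma apply_zpow_of_abel {α : Type*} {s : Set α} {p : Perm α} {φ : α → ℝ} (hbij : BijOn p s s)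
    (habel : ∀ x ∈ s, φ (p x) = φ x + 1) {x : α} (hx : x ∈ s) (k : ℤ) :
    φ ((p ^ k) x) = φ x + k := by
  have hstep (j : ℤ) : φ ((p ^ (j + 1)) x) = φ ((p ^ j) x) + 1 := by
    rw [add_comm, zpow_one_add]
    exact habel _ ((hbij.perm_zpow j).mapsTo hx)
  induction k using Int.induction_on with
  | zero => simp
  | succ k ih => rw [hstep, ih]; push_cast; ring
  | pred k ih =>
    have := hstep (-k - 1)
    rw [sub_add_cancel, ih] at this
    push_cast at this ⊢
    linarith

lemma surjOn_univ_of_abel {α : Type*} [TopologicalSpace α] {s : Set α} {p : Perm α} {φ : α → ℝ}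
    (hs : IsPreconnected s) (hne : s.Nonempty) (hφ : ContinuousOn φ s) (hbij : BijOn p s s)
    (habel : ∀ x ∈ s, φ (p x) = φ x + 1) : SurjOn φ s univ := by
  intro y _
  obtain ⟨x, hx⟩ := hne
  have hmem (k : ℤ) : φ x + k ∈ φ '' s :=
    ⟨_, (hbij.perm_zpow k).mapsTo hx, apply_zpow_of_abel hbij habel hx k⟩
  refine (hs.image φ hφ).ordConnected.out (hmem ⌊y - φ x⌋) (hmem (⌊y - φ x⌋ + 1)) ⟨?_, ?_⟩
  · linarith [Int.floor_le (y - φ x)]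
  · push_cast
    linarith [Int.lt_floor_add_one (y - φ x)]

section SmoothAbelSum

variable {n : WithTop ℕ∞} {I : Set ℝ} {p : Perm ℝ} {S : ℝ → ℝ} {a b : ℝ}

lemma IsPosDiffeoOn.contDiffAt_abelTerm (hp : IsPosDiffeoOn n p I I) (hn : n ≠ 0)
    (hIo : IsOpen I) (hS : ContDiff ℝ n S) (k : ℤ) {x : ℝ} (hx : x ∈ I) :
    ContDiffAt ℝ n (abelTerm S p k) x :=
  (hS.contDiffAt.comp x ((hp.perm_zpow hn hIo k).contDiffAt x hx)).sub contDiffAt_const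

lemma IsPosDiffeoOn.hasDerivAt_abelTerm (hp : IsPosDiffeoOn n p I I) (hn : n ≠ 0)
    (hIo : IsOpen I) (hS : Differentiable ℝ S) (k : ℤ) {x : ℝ} (hx : x ∈ I) :
    HasDerivAt (abelTerm S p k) (deriv S ((p ^ k) x) * deriv ⇑(p ^ k) x) x :=
  ((hS _).hasDerivAt.comp x ((hp.perm_zpow hn hIo k).hasDerivAt hx)).sub_const _

lemma IsPosDiffeoOn.contDiffAt_abelSum (hp : IsPosDiffeoOn n p I I) (hn : n ≠ 0)
    (hIo : IsOpen I) (hS : ContDiff ℝ n S) {x : ℝ} (hx : x ∈ I) {K : Finset ℤ}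
    (hK : ∀ᶠ y in 𝓝 x, ∀ k ∉ K, abelTerm S p k y = 0) : ContDiffAt ℝ n (abelSum S p) x :=
  (ContDiffAt.sum fun k _ => hp.contDiffAt_abelTerm hn hIo hS k hx).congr_of_eventuallyEq
    (abelSum_eventuallyEq_sum hK)

lemma IsPosDiffeoOn.deriv_abelSum_pos (hp : IsPosDiffeoOn n p I I) (hn : n ≠ 0) (hIo : IsOpen I)
    (hS : IsSmoothStep S a b) {x : ℝ} (hx : x ∈ I) {K : Finset ℤ}
    (hK : ∀ᶠ y in 𝓝 x, ∀ k ∉ K, abelTerm S p k y = 0) (hmeet : ∃ k : ℤ, (p ^ k) x ∈ Ioo a b) :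
    0 < deriv (abelSum S p) x := by
  have hderiv (k : ℤ) :=
    hp.hasDerivAt_abelTerm hn hIo (hS.contDiff.differentiable (by simp)) k hx
  have hpos (k : ℤ) : 0 < deriv ⇑(p ^ k) x := (hp.perm_zpow hn hIo k).deriv_pos x hx
  rw [(abelSum_eventuallyEq_sum hK).deriv_eq, (HasDerivAt.fun_sum fun k _ => hderiv k).deriv]
  obtain ⟨k, hk⟩ := hmeet
  have hterm : 0 < deriv S ((p ^ k) x) * deriv ⇑(p ^ k) x := mul_pos (hS.deriv_pos _ hk) (hpos k)
  have hkK : k ∈ K := by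
    by_contra hkK
    have hzero : abelTerm S p k =ᶠ[𝓝 x] fun _ => 0 := hK.mono fun y hy => hy k hkK
    have hderiv_zero := hzero.deriv_eq
    rw [(hderiv k).deriv, deriv_const] at hderiv_zero
    exact hterm.ne' hderiv_zero
  exact Finset.sum_pos' (fun j _ => mul_nonneg hS.monotone.deriv_nonneg (hpos j).le)
    ⟨k, hkK, hterm⟩

end SmoothAbelSum

section Conjugacy

variable {n : ℕ∞} {I J : Set ℝ} {p q : Perm ℝ}

theorem IsPosDiffeoOn.exists_abel_function (hp : IsPosDiffeoOn n p I I) (hn : n ≠ 0)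
    (hIo : IsOpen I) (hIc : I.OrdConnected) (hne : I.Nonempty) (hlt : ∀ x ∈ I, x < p x) :
    ∃ φ : ℝ → ℝ, IsPosDiffeoOn n φ I univ ∧ ∀ x ∈ I, φ (p x) = φ x + 1 := by
  have hmono := hp.strictMonoOn hIo hIc
  have hbij := hp.bijOn
  have hn' : (n : WithTop ℕ∞) ≠ 0 := mod_cast hn
  obtain ⟨x₀, hx₀⟩ := hne
  have hpx₀ : p x₀ ∈ I := hbij.mapsTo hx₀
  obtain ⟨a, ha, rfl⟩ := hbij.surjOn hx₀
  obtain ⟨S, hS⟩ := exists_isSmoothStep (((hlt a ha).trans (hlt _ hx₀)).trans (hlt _ hpx₀))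
  have hmeet : ∀ x ∈ I, ∃ k : ℤ, (p ^ k) x ∈ Ioo a (p (p (p a))) := fun x hx =>
    (exists_zpow_apply_mem_Ico hIc hmono hbij hlt hx₀ hx).imp fun k hk =>
      ⟨(hlt a ha).trans_le hk.1, hk.2.trans (hlt _ hpx₀)⟩
  have hfin : ∀ x ∈ I, ∃ K : Finset ℤ, ∀ᶠ y in 𝓝 x, ∀ k ∉ K, abelTerm S p k y = 0 := fun x hx =>
    exists_finset_eventually_abelTerm_eq_zero hIo hIc hmono hbij hlt hS.eq_zero hS.eq_one ha
      (hbij.mapsTo hpx₀) hx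
  have hsmooth : ∀ x ∈ I, ContDiffAt ℝ n (abelSum S p) x := fun x hx =>
    have ⟨_, hK⟩ := hfin x hx
    hp.contDiffAt_abelSum hn' hIo (hS.contDiff.of_le (mod_cast le_top)) hx hK
  have hderiv : ∀ x ∈ I, 0 < deriv (abelSum S p) x := fun x hx =>
    have ⟨_, hK⟩ := hfin x hx
    hp.deriv_abelSum_pos hn' hIo hS hx hK (hmeet x hx)
  have habel : ∀ x ∈ I, abelSum S p (p x) = abelSum S p x + 1 := fun x hx =>
    have ⟨_, hK⟩ := hfin x hx
    abelSum_apply_perm (summable_of_ne_finset_zero hK.self_of_nhds)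
  have hinj := (strictMonoOn_of_isOpen_of_deriv_pos hIo hIc hderiv).injOn
  have hsurj : SurjOn (abelSum S p) I univ := surjOn_univ_of_abel hIc.isPreconnected ⟨a, ha⟩
    (fun x hx => (hsmooth x hx).continuousAt.continuousWithinAt) hbij habel
  exact ⟨abelSum S p, ⟨hsmooth, ⟨mapsTo_univ _ _, hinj, hsurj⟩, hderiv⟩, habel⟩

lemma IsPosDiffeoOn.exists_conj_of_forall_lt (hn : n ≠ 0) (hIo : IsOpen I)
    (hIc : I.OrdConnected) (hIne : I.Nonempty) (hJo : IsOpen J) (hJc : J.OrdConnected)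
    (hJne : J.Nonempty) (hp : IsPosDiffeoOn n p I I) (hq : IsPosDiffeoOn n q J J)
    (hplt : ∀ x ∈ I, x < p x) (hqlt : ∀ y ∈ J, y < q y) :
    ∃ h : ℝ → ℝ, IsPosDiffeoOn n h I J ∧ ∀ x ∈ I, h (p x) = q (h x) := by
  obtain ⟨φ, hφ, hφp⟩ := hp.exists_abel_function hn hIo hIc hIne hplt
  obtain ⟨ψ, hψ, hψq⟩ := hq.exists_abel_function hn hJo hJc hJne hqlt
  obtain ⟨hleft, hright⟩ := hψ.bijOn.invOn_invFunOn
  have hψinv : IsPosDiffeoOn n (invFunOn ψ J) univ J := hψ.of_leftInvOn (mod_cast hn) hJo hleft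
  have hh := hψinv.comp hφ
  have hψh (x : ℝ) : ψ ((invFunOn ψ J ∘ φ) x) = φ x := hright (mem_univ (φ x))
  refine ⟨_, hh, fun x hx => hψ.bijOn.injOn (hh.bijOn.mapsTo (hp.bijOn.mapsTo hx))
    (hq.bijOn.mapsTo (hh.bijOn.mapsTo hx)) ?_⟩
  rw [hψq _ (hh.bijOn.mapsTo hx), hψh, hψh, hφp x hx]

lemma IsPosDiffeoOn.exists_conj_of_forall_gt (hn : n ≠ 0) (hIo : IsOpen I)
    (hIc : I.OrdConnected) (hIne : I.Nonempty) (hJo : IsOpen J) (hJc : J.OrdConnected)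
    (hJne : J.Nonempty) (hp : IsPosDiffeoOn n p I I) (hq : IsPosDiffeoOn n q J J)
    (hpgt : ∀ x ∈ I, p x < x) (hqgt : ∀ y ∈ J, q y < y) :
    ∃ h : ℝ → ℝ, IsPosDiffeoOn n h I J ∧ ∀ x ∈ I, h (p x) = q (h x) := by
  have hn' : (n : WithTop ℕ∞) ≠ 0 := mod_cast hn
  have hpinv := hp.perm_inv hn' hIo
  have hqinv := hq.perm_inv hn' hJo
  obtain ⟨h, hh, hconj⟩ := exists_conj_of_forall_lt hn hIo hIc hIne hJo hJc hJne hpinv hqinv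
    (fun x hx => by simpa using hpgt _ (hpinv.bijOn.mapsTo hx))
    (fun y hy => by simpa using hqgt _ (hqinv.bijOn.mapsTo hy))
  refine ⟨h, hh, fun x hx => ?_⟩
  have hx' := hconj (p x) (hp.bijOn.mapsTo hx)
  rw [Perm.inv_eq_iff_eq.2 rfl, Perm.eq_inv_iff_eq] at hx'
  exact hx'.symm

theorem IsPosDiffeoOn.exists_conj {f g : ℝ → ℝ} (hn : n ≠ 0) (hIo : IsOpen I)
    (hIc : I.OrdConnected) (hIne : I.Nonempty) (hJo : IsOpen J) (hJc : J.OrdConnected)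
    (hJne : J.Nonempty) (hf : IsPosDiffeoOn n f I I) (hg : IsPosDiffeoOn n g J J)
    (hside : ((∀ x ∈ I, x < f x) ∧ ∀ y ∈ J, y < g y) ∨ ((∀ x ∈ I, f x < x) ∧ ∀ y ∈ J, g y < y)) :
    ∃ h : ℝ → ℝ, IsPosDiffeoOn n h I J ∧ ∀ x ∈ I, h (f x) = g (h x) := by
  obtain ⟨p, hpf⟩ := exists_perm_eqOn_of_bijOn hf.bijOn
  obtain ⟨q, hqg⟩ := exists_perm_eqOn_of_bijOn hg.bijOn
  have hp := hf.congr hIo hpf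
  have hq := hg.congr hJo hqg
  suffices ∃ h : ℝ → ℝ, IsPosDiffeoOn n h I J ∧ ∀ x ∈ I, h (p x) = q (h x) by
    obtain ⟨h, hh, hconj⟩ := this
    exact ⟨h, hh, fun x hx => by rw [← hpf hx, ← hqg (hh.bijOn.mapsTo hx), hconj x hx]⟩
  rcases hside with ⟨hflt, hglt⟩ | ⟨hfgt, hggt⟩
  · exact exists_conj_of_forall_lt hn hIo hIc hIne hJo hJc hJne hp hq
      (fun x hx => (hflt x hx).trans_eq (hpf hx).symm)
      (fun y hy => (hglt y hy).trans_eq (hqg hy).symm)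
  · exact exists_conj_of_forall_gt hn hIo hIc hIne hJo hJc hJne hp hq
      (fun x hx => (hpf hx).trans_lt (hfgt x hx)) (fun y hy => (hqg hy).trans_lt (hggt y hy))

end Conjugacy

theorem stmt_5_general {n : ℕ∞} (hn : n ≠ 0) {I J : Set ℝ}
    (hIo : IsOpen I) (hIc : I.OrdConnected) (hIne : I.Nonempty)
    (hJo : IsOpen J) (hJc : J.OrdConnected) (hJne : J.Nonempty) {f g : ℝ → ℝ}
    (hfs : ContDiffOn ℝ n f I) (hgs : ContDiffOn ℝ n g J) (hfb : BijOn f I I) (hgb : BijOn g J J)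
    (hfd : ∀ x ∈ I, 0 < deriv f x) (hgd : ∀ y ∈ J, 0 < deriv g y) (hffree : ∀ x ∈ I, f x ≠ x) :
    (∃ h : ℝ → ℝ, ContDiffOn ℝ n h I ∧ BijOn h I J ∧ StrictMonoOn h I ∧
        (∀ x ∈ I, 0 < deriv h x) ∧ ∀ x ∈ I, h (f x) = g (h x)) ↔
      ((∀ x ∈ I, x < f x) ∧ (∀ y ∈ J, y < g y)) ∨
      ((∀ x ∈ I, f x < x) ∧ (∀ y ∈ J, g y < y)) := by
  constructor
  · rintro ⟨h, -, hb, hm, -, hconj⟩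
    exact (forall_lt_apply_or_forall_apply_lt hIc.isPreconnected hfs.continuousOn hffree).imp
      (fun hlt => ⟨hlt, forall_lt_apply_of_conj hm hb.surjOn hfb.mapsTo hconj hlt⟩)
      (fun hgt => ⟨hgt, forall_apply_lt_of_conj hm hb.surjOn hfb.mapsTo hconj hgt⟩)
  · intro hside
    have hf : IsPosDiffeoOn n f I I := ⟨fun x hx => hfs.contDiffAt (hIo.mem_nhds hx), hfb, hfd⟩
    have hg : IsPosDiffeoOn n g J J := ⟨fun y hy => hgs.contDiffAt (hJo.mem_nhds hy), hgb, hgd⟩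
    obtain ⟨h, hh, hconj⟩ :=
      IsPosDiffeoOn.exists_conj hn hIo hIc hIne hJo hJc hJne hf hg hside
    exact ⟨h, fun x hx => (hh.contDiffAt x hx).contDiffWithinAt, hh.bijOn,
      hh.strictMonoOn hIo hIc, hh.deriv_pos, hconj⟩

/-- Sternberg: two fixed-point-free orientation-preserving smooth diffeomorphisms of an
open interval `I` are conjugate in `Diffeo⁺(I)` iff their graphs lie on the same side
of the diagonal. -/
theorem stmt_5 (I : Set ℝ) (hIopen : IsOpen I) (hIconn : I.OrdConnected)
    (hIne : I.Nonempty)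
    (f g : ℝ → ℝ)
    (hfs : ContDiffOn ℝ (⊤ : ℕ∞) f I) (hgs : ContDiffOn ℝ (⊤ : ℕ∞) g I)
    (hfb : BijOn f I I) (hgb : BijOn g I I)
    (hfm : StrictMonoOn f I) (hgm : StrictMonoOn g I)
    (hfd : ∀ x ∈ I, 0 < deriv f x) (hgd : ∀ x ∈ I, 0 < deriv g x)
    (hffree : ∀ x ∈ I, f x ≠ x) (hgfree : ∀ x ∈ I, g x ≠ x) :
    (∃ h : ℝ → ℝ, ContDiffOn ℝ (⊤ : ℕ∞) h I ∧ BijOn h I I ∧ StrictMonoOn h I ∧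
        (∀ x ∈ I, 0 < deriv h x) ∧ ∀ x ∈ I, h (f x) = g (h x)) ↔
      ((∀ x ∈ I, x < f x) ∧ (∀ x ∈ I, x < g x)) ∨
      ((∀ x ∈ I, f x < x) ∧ (∀ x ∈ I, g x < x)) :=
  stmt_5_general ENat.top_ne_zero hIopen hIconn hIne hIopen hIconn hIne
    hfs hgs hfb hgb hfd hgd hffree
end

section
/- Given a point a ∈ ℝ, a real number λ, and a formal power series P = a₁X + a₂X² + ⋯ with a₁ > 0, there exists an orientation-preserving smooth diffeomorphism f of ℝ with f(a) = λ and whose Taylor series at a (with constant term removed, i.e. the series of f(a+t)-f(a) in t) equals P. -/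
/-!
By Borel's theorem some smooth `h` has the Taylor series at `a` prescribed for `f'`. Altering `h`
away from `a` keeps its values within `P 1 / 2` of `h a = P 1`, hence above `P 1 / 2 > 0`, and a
primitive of a smooth function bounded below by a positive constant is a diffeomorphism of `ℝ`.

For Borel's theorem, the dilation `x ↦ c⁻ᵐ h (c x)` of a compactly supported `h` equal to
`xᵐ v / m!` near `0` keeps the Taylor series at `0`, while its derivatives of order less than `m`
tend uniformly to `0` as `c → ∞`. With large enough `c`, such terms can be summed over `m`.
-/

open Filter Topology Set
open scoped Nat ContDiff

theorem bddAbove_range_norm_iteratedDeriv {𝕜 F : Type*} [NontriviallyNormedField 𝕜]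
    [NormedAddCommGroup F] [NormedSpace 𝕜 F] {n : ℕ} {f : 𝕜 → F} (hf : ContDiff 𝕜 n f)
    (hf_supp : HasCompactSupport f) : BddAbove (range fun x => ‖iteratedDeriv n f x‖) := by
  simp only [← norm_iteratedFDeriv_eq_norm_iteratedDeriv]
  exact (hf.continuous_iteratedFDeriv le_rfl).norm.bddAbove_range_of_hasCompactSupport
    (hf_supp.iteratedFDeriv n).norm

section Dilation

variable {E : Type*} [NormedAddCommGroup E] [NormedSpace ℝ E] {f : ℝ → E}

/-- The dilation `x ↦ c⁻ᵐ f (c x)`, normalised so as to preserve the `m`-th derivative at `0`.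
Large `c` makes its derivatives of order less than `m` small. -/
noncomputable def dilation (m : ℕ) (c : ℝ) (f : ℝ → E) (x : ℝ) : E :=
  (c ^ m)⁻¹ • f (c * x)

theorem contDiff_dilation {n : ℕ∞ω} (hf : ContDiff ℝ n f) (m : ℕ) (c : ℝ) :
    ContDiff ℝ n (dilation m c f) :=
  (hf.comp (contDiff_const.mul contDiff_id)).const_smul _

theorem hasCompactSupport_dilation (hf : HasCompactSupport f) (m : ℕ) {c : ℝ} (hc : c ≠ 0) :
    HasCompactSupport (dilation m c f) :=
  (hf.comp_smul hc).smul_left (f := fun _ => (c ^ m)⁻¹)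

theorem iteratedDeriv_dilation {n : ℕ} (hf : ContDiff ℝ n f) (m : ℕ) (c x : ℝ) :
    iteratedDeriv n (dilation m c f) x = (c ^ m)⁻¹ • c ^ n • iteratedDeriv n f (c * x) := by
  calc iteratedDeriv n (dilation m c f) x
      = (c ^ m)⁻¹ • iteratedDeriv n (fun y => f (c * y)) x := iteratedDeriv_const_smul_field _ _
    _ = _ := by rw [iteratedDeriv_comp_const_smul hf]

theorem eventually_norm_iteratedDeriv_dilation_le {n m : ℕ} (hf : ContDiff ℝ n f)
    (hf_supp : HasCompactSupport f) (hnm : n < m) {ε : ℝ} (hε : 0 < ε) :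
    ∀ᶠ c : ℝ in atTop, ∀ x, ‖iteratedDeriv n (dilation m c f) x‖ ≤ ε := by
  obtain ⟨C, hC⟩ := bddAbove_range_norm_iteratedDeriv hf hf_supp
  have tendsto_zero : Tendsto (fun c : ℝ => c ^ n / c ^ m * C) atTop (𝓝 0) := by
    simpa only [zero_mul] using (tendsto_pow_div_pow_atTop_zero hnm).mul_const C
  filter_upwards [tendsto_zero.eventually_le_const hε, eventually_ge_atTop 0] with c hcε hc x
  calc ‖iteratedDeriv n (dilation m c f) x‖
      = c ^ n / c ^ m * ‖iteratedDeriv n f (c * x)‖ := by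
        rw [iteratedDeriv_dilation hf, norm_smul, norm_smul, norm_inv, norm_pow, norm_pow,
          Real.norm_of_nonneg hc]
        ring
    _ ≤ c ^ n / c ^ m * C := by gcongr; exact hC (mem_range_self _)
    _ ≤ ε := hcε

theorem iteratedDeriv_dilation_zero_of_eq_single {n m : ℕ} {v : E} (hf : ContDiff ℝ n f)
    (hf_jet : iteratedDeriv n f 0 = (Pi.single m v : ℕ → E) n) {c : ℝ} (hc : c ≠ 0) :
    iteratedDeriv n (dilation m c f) 0 = (Pi.single m v : ℕ → E) n := by
  rw [iteratedDeriv_dilation hf, mul_zero, hf_jet]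
  rcases eq_or_ne n m with rfl | hnm
  · exact inv_smul_smul₀ (pow_ne_zero n hc) _
  · simp only [Pi.single_eq_of_ne hnm, smul_zero]

end Dilation

section Borel

variable {E : Type*} [NormedAddCommGroup E] [NormedSpace ℝ E]

theorem iteratedDeriv_pow_div_factorial_smul_zero (m n : ℕ) (v : E) :
    iteratedDeriv n (fun x : ℝ => (x ^ m / m !) • v) 0 = (Pi.single m v : ℕ → E) n := by
  rw [iteratedDeriv_smul_const (by fun_prop)]
  simp only [div_eq_mul_inv]
  rw [iteratedDeriv_mul_const_field, iteratedDeriv_fun_pow_zero]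
  rcases eq_or_ne n m with rfl | hnm
  · simp [Nat.factorial_ne_zero]
  · simp [hnm]

theorem exists_contDiff_hasCompactSupport_iteratedDeriv_zero_eq_single (m : ℕ) (v : E) :
    ∃ f : ℝ → E, ContDiff ℝ ∞ f ∧ HasCompactSupport f ∧
      ∀ n, iteratedDeriv n f 0 = (Pi.single m v : ℕ → E) n := by
  let χ : ContDiffBump (0 : ℝ) := default
  let f : ℝ → E := fun x => χ x • (x ^ m / m !) • v
  have f_eq_monomial : f =ᶠ[𝓝 0] fun x => (x ^ m / m !) • v := by
    filter_upwards [χ.eventuallyEq_one] with x hx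
    simp only [f, hx, Pi.one_apply, one_smul]
  refine ⟨f, χ.contDiff.smul (by fun_prop), χ.hasCompactSupport.smul_right, fun n => ?_⟩
  rw [f_eq_monomial.iteratedDeriv_eq, iteratedDeriv_pow_div_factorial_smul_zero]

theorem exists_iteratedDeriv_zero_eq_single_and_norm_iteratedDeriv_le (m : ℕ) (v : E) {ε : ℝ}
    (hε : 0 < ε) :
    ∃ f : ℝ → E, ContDiff ℝ ∞ f ∧ HasCompactSupport f ∧
      (∀ n, iteratedDeriv n f 0 = (Pi.single m v : ℕ → E) n) ∧
      ∀ n < m, ∀ x, ‖iteratedDeriv n f x‖ ≤ ε := by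
  obtain ⟨f, hf, hf_supp, hf_jet⟩ :=
    exists_contDiff_hasCompactSupport_iteratedDeriv_zero_eq_single m v
  have small : ∀ᶠ c : ℝ in atTop, ∀ n < m, ∀ x, ‖iteratedDeriv n (dilation m c f) x‖ ≤ ε :=
    (finite_lt_nat m).eventually_all.2 fun n hn =>
      eventually_norm_iteratedDeriv_dilation_le (hf.of_le (mod_cast le_top)) hf_supp hn hε
  obtain ⟨c, hc_small, hc⟩ := (small.and (eventually_ne_atTop 0)).exists
  exact ⟨dilation m c f, contDiff_dilation hf m c, hasCompactSupport_dilation hf_supp m hc,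
    fun n => iteratedDeriv_dilation_zero_of_eq_single (hf.of_le (mod_cast le_top)) (hf_jet n) hc,
    hc_small⟩

theorem iteratedDeriv_tsum_apply {ι 𝕜 F : Type*} [RCLike 𝕜] [NormedAddCommGroup F]
    [NormedSpace 𝕜 F] [CompleteSpace F] {N : ℕ∞} {f : ι → 𝕜 → F} {u : ℕ → ι → ℝ}
    (hf : ∀ i, ContDiff 𝕜 N (f i)) (hu : ∀ n : ℕ, (n : ℕ∞) ≤ N → Summable (u n))
    (hfu : ∀ (n : ℕ) (i : ι) (x : 𝕜), (n : ℕ∞) ≤ N → ‖iteratedDeriv n (f i) x‖ ≤ u n i) {n : ℕ}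
    (hn : (n : ℕ∞) ≤ N) (x : 𝕜) :
    iteratedDeriv n (fun y => ∑' i, f i y) x = ∑' i, iteratedDeriv n (f i) x := by
  simp only [← norm_iteratedFDeriv_eq_norm_iteratedDeriv] at hfu
  have summable : Summable fun i => iteratedFDeriv 𝕜 n (f i) x :=
    .of_norm_bounded (hu n hn) fun i => hfu n i x hn
  simp only [iteratedDeriv_eq_iteratedFDeriv, iteratedFDeriv_tsum_apply hf hu hfu hn,
    ContinuousMultilinearMap.tsum_eval summable]

variable [CompleteSpace E]

theorem exists_contDiff_iteratedDeriv_zero_eq (a : ℕ → E) :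
    ∃ f : ℝ → E, ContDiff ℝ ∞ f ∧ ∀ n, iteratedDeriv n f 0 = a n := by
  choose F hF hF_supp hF_jet hF_small using fun m =>
    exists_iteratedDeriv_zero_eq_single_and_norm_iteratedDeriv_le m (a m)
      (pow_pos (one_half_pos (α := ℝ)) m)
  let u : ℕ → ℕ → ℝ := fun n m => ⨆ x, ‖iteratedDeriv n (F m) x‖
  have norm_le_u (n m : ℕ) (x : ℝ) : ‖iteratedDeriv n (F m) x‖ ≤ u n m :=
    le_ciSup (bddAbove_range_norm_iteratedDeriv ((hF m).of_le (mod_cast le_top)) (hF_supp m)) x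
  have summable_u (n : ℕ) : Summable (u n) := by
    refine summable_geometric_two.of_norm_bounded_eventually_nat ?_
    filter_upwards [eventually_gt_atTop n] with m hm
    rw [Real.norm_of_nonneg (Real.iSup_nonneg fun _ => norm_nonneg _)]
    exact ciSup_le (hF_small m n hm)
  refine ⟨fun x => ∑' m, F m x, contDiff_tsum hF (fun n _ => summable_u n) fun n m x _ => ?_,
    fun n => ?_⟩
  · exact norm_iteratedFDeriv_eq_norm_iteratedDeriv.trans_le (norm_le_u n m x)
  · calc iteratedDeriv n (fun x => ∑' m, F m x) 0 = ∑' m, iteratedDeriv n (F m) 0 :=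
          iteratedDeriv_tsum_apply hF (fun n _ => summable_u n) (fun n m x _ => norm_le_u n m x)
            le_top 0
      _ = ∑' m, (Pi.single m (a m) : ℕ → E) n := by simp only [hF_jet]
      _ = a n := by
        rw [tsum_eq_single n fun m hm => Pi.single_eq_of_ne hm.symm _, Pi.single_eq_same]

theorem exists_contDiff_iteratedDeriv_eq (a : ℕ → E) (x₀ : ℝ) :
    ∃ f : ℝ → E, ContDiff ℝ ∞ f ∧ ∀ n, iteratedDeriv n f x₀ = a n := by
  obtain ⟨f, hf, hf_jet⟩ := exists_contDiff_iteratedDeriv_zero_eq a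
  refine ⟨fun x => f (x - x₀), hf.comp (contDiff_id.sub contDiff_const), fun n => ?_⟩
  simp only [iteratedDeriv_comp_sub_const, sub_self, hf_jet]

end Borel

theorem exists_contDiff_eventuallyEq_and_norm_sub_le {E F : Type*} [NormedAddCommGroup E]
    [NormedSpace ℝ E] [HasContDiffBump E] [NormedAddCommGroup F] [NormedSpace ℝ F] {n : ℕ∞}
    {f : E → F} (hf : ContDiff ℝ n f) (x₀ : E) {ε : ℝ} (hε : 0 < ε) :
    ∃ g : E → F, ContDiff ℝ n g ∧ g =ᶠ[𝓝 x₀] f ∧ ∀ x, ‖g x - f x₀‖ ≤ ε := by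
  obtain ⟨δ, hδ, hfδ⟩ := Metric.continuousAt_iff.1 hf.continuous.continuousAt ε hε
  let χ : ContDiffBump x₀ := ⟨δ / 2, δ, half_pos hδ, half_lt_self hδ⟩
  refine ⟨fun x => f x₀ + χ x • (f x - f x₀),
    contDiff_const.add (χ.contDiff.smul (hf.sub contDiff_const)), ?_, fun x => ?_⟩
  · filter_upwards [χ.eventuallyEq_one] with x hx
    rw [hx, Pi.one_apply, one_smul, add_sub_cancel]
  · rw [add_sub_cancel_left, norm_smul, Real.norm_of_nonneg χ.nonneg]
    rcases lt_or_ge (dist x x₀) δ with hx | hx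
    · exact (mul_le_of_le_one_left (norm_nonneg _) χ.le_one).trans
        ((dist_eq_norm (f x) (f x₀)).symm.trans_le (hfδ hx).le)
    · rw [χ.zero_of_le_dist hx, zero_mul]
      exact hε.le

theorem exists_hasDerivAt_of_continuous {E : Type*} [NormedAddCommGroup E] [NormedSpace ℝ E]
    [CompleteSpace E] {g : ℝ → E} (hg : Continuous g) (a : ℝ) (v : E) :
    ∃ f : ℝ → E, f a = v ∧ ∀ x, HasDerivAt f (g x) x :=
  ⟨fun x => v + ∫ t in a..x, g t, by simp,
    fun x => (hg.integral_hasStrictDerivAt a x).hasDerivAt.const_add v⟩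

theorem surjective_of_pos_le_deriv {f : ℝ → ℝ} (hf : Differentiable ℝ f) {C : ℝ} (hC : 0 < C)
    (hf' : ∀ x, C ≤ deriv f x) : Function.Surjective f := by
  have growth := mul_sub_le_image_sub_of_le_deriv hf hf'
  refine hf.continuous.surjective ?_ ?_
  · refine tendsto_atTop_mono' _ ?_
      (tendsto_atTop_add_const_left _ (f 0) (tendsto_id.const_mul_atTop hC))
    filter_upwards [eventually_ge_atTop 0] with x hx
    simpa only [id, sub_zero, add_comm (f 0), le_sub_iff_add_le] using growth hx
  · refine tendsto_atBot_mono' _ ?_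
      (tendsto_atBot_add_const_left _ (f 0) (tendsto_id.const_mul_atBot hC))
    filter_upwards [eventually_le_atBot 0] with x hx
    have := growth hx
    simp only [id]
    linarith

/-- Given `a ∈ ℝ`, `λ ∈ ℝ`, and a formal power series `P = a₁X + a₂X² + ⋯` with
`a₁ > 0`, there is an orientation-preserving smooth diffeomorphism `f` of `ℝ` with
`f a = λ` and Taylor series `T_a f = P` (i.e. `f⁽ⁿ⁾(a) = n!·aₙ` for `n ≥ 1`). -/
theorem stmt_12 (a lam : ℝ) (P : ℕ → ℝ) (hP1 : 0 < P 1) :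
    ∃ f : ℝ → ℝ, ContDiff ℝ (⊤ : ℕ∞) f ∧ Function.Bijective f ∧ StrictMono f ∧
      (∀ x : ℝ, 0 < deriv f x) ∧ f a = lam ∧
      ∀ n : ℕ, 1 ≤ n → iteratedDeriv n f a = n.factorial * P n := by
  obtain ⟨h, hh, h_jet⟩ := exists_contDiff_iteratedDeriv_eq (fun n => (n + 1)! * P (n + 1)) a
  have h_a : h a = P 1 := by simpa using h_jet 0
  obtain ⟨g, hg, hgh, hg_near⟩ := exists_contDiff_eventuallyEq_and_norm_sub_le hh a (half_pos hP1)
  obtain ⟨f, hf_a, hf⟩ := exists_hasDerivAt_of_continuous hg.continuous a lam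
  have hf_diff : Differentiable ℝ f := fun x => (hf x).differentiableAt
  have deriv_f : deriv f = g := funext fun x => (hf x).deriv
  have le_deriv (x : ℝ) : P 1 / 2 ≤ deriv f x := by
    have := neg_le_of_abs_le (hg_near x)
    rw [h_a] at this
    rw [deriv_f]
    linarith
  have deriv_pos (x : ℝ) : 0 < deriv f x := (half_pos hP1).trans_le (le_deriv x)
  have f_mono : StrictMono f := strictMono_of_deriv_pos deriv_pos
  refine ⟨f, contDiff_infty_iff_deriv.2 ⟨hf_diff, deriv_f ▸ hg⟩,
    ⟨f_mono.injective, surjective_of_pos_le_deriv hf_diff (half_pos hP1) le_deriv⟩, f_mono,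
    deriv_pos, hf_a, fun n hn => ?_⟩
  obtain ⟨m, rfl⟩ := Nat.exists_eq_add_of_le' hn
  rw [iteratedDeriv_succ', deriv_f, hgh.iteratedDeriv_eq, h_jet]
end
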